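/- arXiv:2103.05574 — 2 statements merged into one kernel-verified Lean document; each statement's English description precedes it below -/
import Mathlib

section
/- Let p ≥ 2 and let X ∼ N(0, I_p) and Y ∼ N(0, I_p) be independent standard p-dimensional Gaussian vectors, and let λ₂(S) denote the smallest eigenvalue of S = (X Y)ᵀ(X Y). Then λ₂(S) is stochastically dominated by the chi-squared distribution with p − 1 degrees of freedom: for every t ≥ 0, P(λ₂(S) > t) ≤ P(Z > t) where Z ∼ χ²_{p−1}. -/
open MeasureTheory ProbabilityTheory Matrix

/-- The multivariate normal distribution `N(μ, I_p)` on `ℝ^p`, realized as the product of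
independent one-dimensional Gaussians `N(μ i, 1)`. -/
noncomputable def mvGaussianId (p : ℕ) (μ : Fin p → ℝ) : Measure (Fin p → ℝ) :=
  Measure.pi fun i => gaussianReal (μ i) 1

/-- The chi-squared distribution with `k` degrees of freedom, i.e. the Gamma distribution
with shape `k/2` and rate `1/2`. -/
noncomputable def chiSquared (k : ℝ) : Measure ℝ :=
  gammaMeasure (k / 2) (1 / 2)

/-- The `p × 2` matrix whose columns are `X` and `Y`. -/
noncomputable def colMatrix (p : ℕ) (X Y : Fin p → ℝ) : Matrix (Fin p) (Fin 2) ℝ :=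
  Matrix.of fun i j => ![X i, Y i] j

/-!
Rayleigh's inequality for `S` at the vector `(-s, 1)` gives `λ₂(S) ≤ λ₂(S) (1 + s²) ≤ ‖Y - s X‖²`
for every `s`, so `λ₂(S)` is at most the squared norm of the component of `Y` orthogonal to `X`.
Conditionally on `X = x ≠ 0`, that component is a standard Gaussian vector in the
`(p - 1)`-dimensional space `xᗮ`, and its squared norm has law `χ²_{p-1}`; for `X = 0` the smallest
eigenvalue vanishes.

That the squared norm of a standard Gaussian vector is chi-squared is read off from characteristic
functions. The one of a Gamma law comes from its real moment generating function, computed by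
exponential tilting of the density, by analytic continuation.
-/

section Gamma

variable {a r : ℝ}

lemma integral_gammaPDFReal (ha : 0 < a) (hr : 0 < r) : ∫ x, gammaPDFReal a r x = 1 := by
  rw [integral_eq_lintegral_of_nonneg_ae (ae_of_all _ (gammaPDFReal_nonneg ha hr)) (by fun_prop)]
  exact congrArg ENNReal.toReal (lintegral_gammaPDF_eq_one ha hr)

lemma gammaPDFReal_mul_exp {s : ℝ} (hr : 0 < r) (hs : s < r) (x : ℝ) :
    gammaPDFReal a r x * Real.exp (s * x) =
      (r / (r - s)) ^ a * gammaPDFReal a (r - s) x := by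
  have hrs : 0 < r - s := sub_pos.2 hs
  unfold gammaPDFReal
  split_ifs
  · have hexp : Real.exp (-((r - s) * x)) = Real.exp (-(r * x)) * Real.exp (s * x) := by
      rw [← Real.exp_add]; ring_nf
    rw [hexp, Real.div_rpow hr.le hrs.le]
    field_simp
  · simp

lemma integral_gammaMeasure {E : Type*} [NormedAddCommGroup E] [NormedSpace ℝ E]
    (ha : 0 < a) (hr : 0 < r) (f : ℝ → E) :
    ∫ x, f x ∂gammaMeasure a r = ∫ x, gammaPDFReal a r x • f x := by
  have hmeas : Measurable (gammaPDF a r) := (measurable_gammaPDFReal a r).ennreal_ofReal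
  rw [gammaMeasure, integral_withDensity_eq_integral_toReal_smul hmeas
    (ae_of_all _ fun _ ↦ ENNReal.ofReal_lt_top)]
  simp [gammaPDF, ENNReal.toReal_ofReal (gammaPDFReal_nonneg ha hr _)]

lemma mgf_id_gammaMeasure (ha : 0 < a) (hr : 0 < r) {s : ℝ} (hs : s < r) :
    mgf id (gammaMeasure a r) s = (r / (r - s)) ^ a := by
  simp only [mgf, id, integral_gammaMeasure ha hr, smul_eq_mul, gammaPDFReal_mul_exp hr hs,
    integral_const_mul, integral_gammaPDFReal ha (sub_pos.2 hs), mul_one]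

lemma Iio_subset_interior_integrableExpSet_gammaMeasure (ha : 0 < a) (hr : 0 < r) :
    Set.Iio r ⊆ interior (integrableExpSet id (gammaMeasure a r)) := by
  refine interior_maximal (fun s hs ↦ ?_) isOpen_Iio
  have := isProbabilityMeasure_gammaMeasure ha hr
  have hpos : 0 < mgf id (gammaMeasure a r) s := by
    rw [mgf_id_gammaMeasure ha hr hs]
    exact Real.rpow_pos_of_pos (div_pos hr (sub_pos.2 hs)) a
  exact mgf_pos_iff.1 hpos

lemma div_sub_mem_slitPlane (hr : 0 < r) {z : ℂ} (hz : z.re < r) :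
    (r / (r - z) : ℂ) ∈ Complex.slitPlane := by
  have hz' : 0 < ((r : ℂ) - z).re := by simpa using hz
  left
  rw [div_eq_mul_inv, Complex.re_ofReal_mul, Complex.inv_re]
  have : 0 < Complex.normSq ((r : ℂ) - z) := Complex.normSq_pos.2 fun h ↦ by simp [h] at hz'
  positivity

lemma complexMGF_id_gammaMeasure (ha : 0 < a) (hr : 0 < r) {z : ℂ} (hz : z.re < r) :
    complexMGF id (gammaMeasure a r) z = (r / (r - z)) ^ (a : ℂ) := by
  have hopen : IsOpen {z : ℂ | z.re < r} := isOpen_lt Complex.continuous_re continuous_const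
  have hleft : AnalyticOnNhd ℂ (complexMGF id (gammaMeasure a r)) {z : ℂ | z.re < r} :=
    analyticOnNhd_complexMGF.mono fun _ hw ↦
      Iio_subset_interior_integrableExpSet_gammaMeasure ha hr hw
  have hright : AnalyticOnNhd ℂ (fun w : ℂ ↦ (r / (r - w)) ^ (a : ℂ)) {z : ℂ | z.re < r} := by
    refine DifferentiableOn.analyticOnNhd (fun w hw ↦ ?_) hopen
    have hw' : (r : ℂ) - w ≠ 0 := fun h ↦ by
      simp [← sub_eq_zero.1 h] at hw
    exact (((differentiableAt_const _).div (by fun_prop) hw').cpow_const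
      (div_sub_mem_slitPlane hr hw)).differentiableWithinAt
  have hreal (s : ℝ) (hs : s < r) :
      complexMGF id (gammaMeasure a r) s = (r / (r - s)) ^ (a : ℂ) := by
    rw [complexMGF_ofReal, mgf_id_gammaMeasure ha hr hs,
      Complex.ofReal_cpow (div_pos hr (sub_pos.2 hs)).le]
    push_cast
    rfl
  have hfreq : ∃ᶠ w in nhdsWithin (0 : ℂ) {0}ᶜ,
      complexMGF id (gammaMeasure a r) w = (r / (r - w)) ^ (a : ℂ) := by
    have hev : ∀ᶠ s : ℝ in nhdsWithin 0 {0}ᶜ,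
        complexMGF id (gammaMeasure a r) s = (r / (r - s)) ^ (a : ℂ) :=
      nhdsWithin_le_nhds ((eventually_lt_nhds hr).mono hreal)
    have htend : Filter.Tendsto ((↑) : ℝ → ℂ) (nhdsWithin 0 {0}ᶜ) (nhdsWithin 0 {0}ᶜ) :=
      Complex.continuous_ofReal.continuousWithinAt.tendsto_nhdsWithin (by simp [Set.MapsTo])
    exact htend.frequently hev.frequently
  exact hleft.eqOn_of_preconnected_of_frequently_eq hright
    (convex_halfSpace_re_lt r).isPreconnected (by simpa using hr) hfreq hz

lemma charFun_gammaMeasure (ha : 0 < a) (hr : 0 < r) (t : ℝ) :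
    charFun (gammaMeasure a r) t = (r / (r - t * Complex.I)) ^ (a : ℂ) := by
  rw [← complexMGF_id_mul_I, complexMGF_id_gammaMeasure ha hr (by simpa using hr)]

lemma map_sum_pi_gammaMeasure {ι : Type*} [Fintype ι] [Nonempty ι] {a : ι → ℝ}
    (ha : ∀ i, 0 < a i) (hr : 0 < r) :
    (Measure.pi fun i ↦ gammaMeasure (a i) r).map (fun x ↦ ∑ i, x i) =
      gammaMeasure (∑ i, a i) r := by
  have hsum : 0 < ∑ i, a i := Finset.sum_pos (fun i _ ↦ ha i) Finset.univ_nonempty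
  have := isProbabilityMeasure_gammaMeasure hsum hr
  have (i : ι) := isProbabilityMeasure_gammaMeasure (ha i) hr
  refine Measure.ext_of_charFun (funext fun t ↦ ?_)
  have hne : (r / (r - t * Complex.I) : ℂ) ≠ 0 :=
    Complex.slitPlane_ne_zero (div_sub_mem_slitPlane hr (by simpa using hr))
  simp [charFun_map_sum_pi_eq_prod, charFun_gammaMeasure, hsum, ha, hr,
    Complex.cpow_def_of_ne_zero hne, ← Complex.exp_sum, Finset.mul_sum]

end Gamma

section ChiSquared

lemma ofReal_mul_cpow {c : ℝ} (hc : 0 < c) {w : ℂ} (hw : w ≠ 0) (s : ℂ) :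
    ((c : ℂ) * w) ^ s = (c : ℂ) ^ s * w ^ s := by
  have hc' : (c : ℂ) ≠ 0 := Complex.ofReal_ne_zero.2 hc.ne'
  rw [Complex.cpow_def_of_ne_zero (mul_ne_zero hc' hw), Complex.cpow_def_of_ne_zero hc',
    Complex.cpow_def_of_ne_zero hw, Complex.log_ofReal_mul hc hw, Complex.ofReal_log hc.le,
    add_mul, Complex.exp_add]

lemma charFun_map_sq_gaussianReal {v : NNReal} (hv : v ≠ 0) (t : ℝ) :
    charFun ((gaussianReal 0 v).map (· ^ 2)) t =
      (((1 / (2 * v) : ℝ) : ℂ) / ((1 / (2 * v) : ℝ) - t * Complex.I)) ^ (1 / 2 : ℂ) := by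
  have hv' : 0 < (v : ℝ) := by positivity
  have hpi : 0 < 2 * Real.pi * v := by positivity
  set b : ℂ := (1 / (2 * v) : ℝ) - t * Complex.I with hb
  have hbre : 0 < b.re := by simpa [hb] using hv'
  have hb0 : b ≠ 0 := fun h ↦ by simp [h] at hbre
  have hintegrand (x : ℝ) : gaussianPDFReal 0 v x • Complex.exp (t * (x ^ 2 : ℝ) * Complex.I) =
      ((√(2 * Real.pi * v))⁻¹ : ℝ) * Complex.exp (-b * x ^ 2) := by
    rw [gaussianPDFReal, Complex.real_smul, Complex.ofReal_mul, mul_assoc, Complex.ofReal_exp,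
      ← Complex.exp_add, hb]
    congr 2
    push_cast
    ring
  have hscale : (Real.pi / b : ℂ) =
      ((2 * Real.pi * v : ℝ) : ℂ) * (((1 / (2 * v) : ℝ) : ℂ) / b) := by
    rw [← mul_div_assoc, ← Complex.ofReal_mul]
    field_simp
  have hsqrt : ((2 * Real.pi * v : ℝ) : ℂ) ^ (1 / 2 : ℂ) = (√(2 * Real.pi * v) : ℝ) := by
    rw [Real.sqrt_eq_rpow, Complex.ofReal_cpow hpi.le]
    norm_num
  have hquot : (((1 / (2 * v) : ℝ) : ℂ) / b) ≠ 0 :=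
    div_ne_zero (Complex.ofReal_ne_zero.2 (by positivity)) hb0
  rw [charFun_apply_real, integral_map (by fun_prop) (by fun_prop),
    integral_gaussianReal_eq_integral_smul hv]
  simp only [hintegrand]
  rw [integral_const_mul, integral_gaussian_complex hbre, hscale, ofReal_mul_cpow hpi hquot, hsqrt,
    ← mul_assoc, ← Complex.ofReal_mul, inv_mul_cancel₀ (Real.sqrt_pos.2 hpi).ne',
    Complex.ofReal_one, one_mul]

lemma map_sq_gaussianReal {v : NNReal} (hv : v ≠ 0) :
    (gaussianReal 0 v).map (· ^ 2) = gammaMeasure (1 / 2) (1 / (2 * v)) := by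
  have hrate : 0 < 1 / (2 * (v : ℝ)) := by positivity
  have := isProbabilityMeasure_gammaMeasure one_half_pos hrate
  refine Measure.ext_of_charFun (funext fun t ↦ ?_)
  rw [charFun_map_sq_gaussianReal hv, charFun_gammaMeasure one_half_pos hrate]
  norm_num

lemma map_sum_sq_pi_gaussianReal {ι : Type*} [Fintype ι] [Nonempty ι] :
    (Measure.pi fun _ : ι ↦ gaussianReal 0 1).map (fun x ↦ ∑ i, x i ^ 2) =
      chiSquared (Fintype.card ι) := by
  have hsq : (gaussianReal 0 1).map (· ^ 2) = gammaMeasure (1 / 2) (1 / 2) := by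
    simpa using map_sq_gaussianReal one_ne_zero
  calc (Measure.pi fun _ : ι ↦ gaussianReal 0 1).map (fun x ↦ ∑ i, x i ^ 2)
    _ = ((Measure.pi fun _ : ι ↦ gaussianReal 0 1).map (fun x i ↦ x i ^ 2)).map
          (fun x ↦ ∑ i, x i) := by
        rw [Measure.map_map (by fun_prop) (by fun_prop)]
        rfl
    _ = (Measure.pi fun _ : ι ↦ gammaMeasure (1 / 2) (1 / 2)).map (fun x ↦ ∑ i, x i) := by
        have := Measure.isProbabilityMeasure_map (μ := gaussianReal 0 1) (f := (· ^ 2))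
          (by fun_prop)
        rw [Measure.pi_map_pi (f := fun _ x ↦ x ^ 2) (by fun_prop), hsq]
    _ = chiSquared (Fintype.card ι) := by
        rw [map_sum_pi_gammaMeasure (fun _ ↦ one_half_pos) one_half_pos, chiSquared]
        simp [div_eq_mul_inv]

variable {E : Type*} [NormedAddCommGroup E] [InnerProductSpace ℝ E] [FiniteDimensional ℝ E]
  [MeasurableSpace E] [BorelSpace E]

lemma map_norm_sq_stdGaussian [Nontrivial E] :
    (stdGaussian E).map (fun x ↦ ‖x‖ ^ 2) = chiSquared (Module.finrank ℝ E) := by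
  have : Nonempty (Fin (Module.finrank ℝ E)) := Fin.pos_iff_nonempty.1 Module.finrank_pos
  have hnorm (x : Fin (Module.finrank ℝ E) → ℝ) :
      ‖∑ i, x i • stdOrthonormalBasis ℝ E i‖ ^ 2 = ∑ i, x i ^ 2 := by
    rw [← OrthonormalBasis.sum_sq_norm_inner_right (stdOrthonormalBasis ℝ E)]
    simp [(stdOrthonormalBasis ℝ E).orthonormal.inner_right_fintype]
  rw [stdGaussian, Measure.map_map (by fun_prop) (by fun_prop)]
  simp only [Function.comp_def, hnorm, map_sum_sq_pi_gaussianReal, Fintype.card_fin]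

lemma map_orthogonalProjectionOnto_stdGaussian (K : Submodule ℝ E) :
    (stdGaussian E).map K.orthogonalProjectionOnto = stdGaussian K := by
  refine Measure.ext_of_charFun (funext fun t ↦ ?_)
  rw [charFun_stdGaussian, charFun_apply, integral_map (by fun_prop) (by fun_prop)]
  simpa [charFun_apply] using charFun_stdGaussian (t : E)

lemma map_norm_sq_starProjection_stdGaussian (K : Submodule ℝ E) [Nontrivial K] :
    (stdGaussian E).map (fun x ↦ ‖K.starProjection x‖ ^ 2) = chiSquared (Module.finrank ℝ K) := by
  rw [← map_norm_sq_stdGaussian, ← map_orthogonalProjectionOnto_stdGaussian,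
    Measure.map_map (by fun_prop) (by fun_prop)]
  rfl

end ChiSquared

lemma measure_prodMk_mem_le_of_forall_map_preimage_le {Ω α β : Type*} [MeasurableSpace Ω]
    [MeasurableSpace α] [MeasurableSpace β] {P : Measure Ω} [IsProbabilityMeasure P]
    {X : Ω → α} {Y : Ω → β} (hX : AEMeasurable X P) (hY : AEMeasurable Y P)
    (hXY : IndepFun X Y P) {A : Set (α × β)} (hA : MeasurableSet A) {c : ENNReal}
    (hc : ∀ x, P.map Y (Prod.mk x ⁻¹' A) ≤ c) :
    P {ω | (X ω, Y ω) ∈ A} ≤ c := by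
  have := Measure.isProbabilityMeasure_map hX
  calc P {ω | (X ω, Y ω) ∈ A}
    _ = ((P.map X).prod (P.map Y)) A := by
        rw [← hXY.map_prod_eq_prod_map_map hX hY,
          Measure.map_apply_of_aemeasurable (hX.prodMk hY) hA]
        rfl
    _ = ∫⁻ x, P.map Y (Prod.mk x ⁻¹' A) ∂P.map X := Measure.prod_apply hA
    _ ≤ ∫⁻ _, c ∂P.map X := lintegral_mono hc
    _ = c := by simp

section Residual

variable {E : Type*} [NormedAddCommGroup E] [InnerProductSpace ℝ E]

/-- The squared norm of the component of `y` orthogonal to `x`, that is, the residual sum of squares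
of the regression of `y` on `x`; it is `‖y‖ ^ 2` when `x = 0`. -/
noncomputable def residualNormSq (x y : E) : ℝ :=
  ‖(ℝ ∙ x)ᗮ.starProjection y‖ ^ 2

variable [MeasurableSpace E] [BorelSpace E]

lemma measurable_residualNormSq [SecondCountableTopology E] :
    Measurable fun q : E × E ↦ residualNormSq q.1 q.2 := by
  simp only [residualNormSq, Submodule.starProjection_orthogonal_val,
    Submodule.starProjection_singleton, RCLike.ofReal_real_eq_id, id]
  fun_prop

variable [FiniteDimensional ℝ E]

lemma map_residualNormSq_stdGaussian (hE : 2 ≤ Module.finrank ℝ E) {x : E} (hx : x ≠ 0) :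
    (stdGaussian E).map (residualNormSq x) = chiSquared (Module.finrank ℝ E - 1) := by
  have hrank : Module.finrank ℝ (ℝ ∙ x)ᗮ = Module.finrank ℝ E - 1 := by
    refine Submodule.finrank_add_finrank_orthogonal' ?_
    rw [finrank_span_singleton hx]
    omega
  have : Nontrivial (ℝ ∙ x)ᗮ := Module.nontrivial_of_finrank_pos (R := ℝ) (by omega)
  rw [← Nat.cast_pred (by omega), ← hrank]
  exact map_norm_sq_starProjection_stdGaussian (ℝ ∙ x)ᗮ

lemma measure_ne_zero_and_lt_residualNormSq_le (hE : 2 ≤ Module.finrank ℝ E) {Ω : Type*}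
    [MeasurableSpace Ω] {P : Measure Ω} {X Y : Ω → E} (hX : AEMeasurable X P)
    (hY : HasLaw Y (stdGaussian E) P) (hXY : IndepFun X Y P) (t : ℝ) :
    P {ω | X ω ≠ 0 ∧ t < residualNormSq (X ω) (Y ω)} ≤
      chiSquared (Module.finrank ℝ E - 1) (Set.Ioi t) := by
  have := hY.isProbabilityMeasure
  have hmeas : MeasurableSet {q : E × E | q.1 ≠ 0 ∧ t < residualNormSq q.1 q.2} :=
    (measurableSet_eq_fun measurable_fst measurable_const).compl.inter
      (measurableSet_lt measurable_const measurable_residualNormSq)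
  refine measure_prodMk_mem_le_of_forall_map_preimage_le hX hY.aemeasurable hXY hmeas fun x ↦ ?_
  rw [hY.map_eq]
  obtain rfl | hx := eq_or_ne x 0
  · simp
  · have hmeas_x : Measurable (residualNormSq x) := by
      unfold residualNormSq
      fun_prop
    rw [← map_residualNormSq_stdGaussian hE hx, Measure.map_apply hmeas_x measurableSet_Ioi]
    exact measure_mono fun y hy ↦ hy.2

end Residual

section SmallestEigenvalue

open scoped MatrixOrder in
lemma iInf_eigenvalues_mul_dotProduct_le {n : Type*} [Fintype n] [DecidableEq n]
    {A : Matrix n n ℝ} (hA : A.IsHermitian) (v : n → ℝ) :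
    (⨅ j, hA.eigenvalues j) * (v ⬝ᵥ v) ≤ v ⬝ᵥ A *ᵥ v := by
  have hle : algebraMap ℝ (Matrix n n ℝ) (⨅ j, hA.eigenvalues j) ≤ A := by
    rw [algebraMap_le_iff_le_spectrum (ha := hA.isSelfAdjoint),
      hA.spectrum_real_eq_range_eigenvalues]
    exact Set.forall_mem_range.2 (ciInf_le (Set.finite_range _).bddBelow)
  have hnonneg := (Matrix.le_iff.1 hle).dotProduct_mulVec_nonneg v
  simpa [sub_mulVec, Algebra.algebraMap_eq_smul_one, smul_mulVec] using hnonneg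

variable {p : ℕ} {x y : Fin p → ℝ}
  (hS : ((colMatrix p x y)ᵀ * colMatrix p x y).IsHermitian)

lemma iInf_eigenvalues_mul_add_sq_le (c d : ℝ) :
    (⨅ j, hS.eigenvalues j) * (c ^ 2 + d ^ 2) ≤
      ‖c • WithLp.toLp 2 x + d • WithLp.toLp 2 y‖ ^ 2 := by
  have hmulVec : colMatrix p x y *ᵥ ![c, d] = c • x + d • y := by
    ext i
    simp [mulVec, colMatrix, dotProduct, mul_comm]
  calc (⨅ j, hS.eigenvalues j) * (c ^ 2 + d ^ 2)
    _ = (⨅ j, hS.eigenvalues j) * (![c, d] ⬝ᵥ ![c, d]) := by simp [sq]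
    _ ≤ ![c, d] ⬝ᵥ ((colMatrix p x y)ᵀ * colMatrix p x y) *ᵥ ![c, d] :=
        iInf_eigenvalues_mul_dotProduct_le hS _
    _ = (c • x + d • y) ⬝ᵥ (c • x + d • y) := by
        rw [← mulVec_mulVec, dotProduct_mulVec, vecMul_transpose, hmulVec]
    _ = ‖c • WithLp.toLp 2 x + d • WithLp.toLp 2 y‖ ^ 2 := by
        rw [EuclideanSpace.real_norm_sq_eq]
        simp [dotProduct, sq]

lemma iInf_eigenvalues_le_norm_sq_left : ⨅ j, hS.eigenvalues j ≤ ‖WithLp.toLp 2 x‖ ^ 2 := by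
  simpa using iInf_eigenvalues_mul_add_sq_le hS 1 0

lemma iInf_eigenvalues_le_residualNormSq :
    ⨅ j, hS.eigenvalues j ≤ residualNormSq (WithLp.toLp 2 x) (WithLp.toLp 2 y) := by
  have hnonneg : 0 ≤ ⨅ j, hS.eigenvalues j :=
    Real.iInf_nonneg (eigenvalues_conjTranspose_mul_self_nonneg (colMatrix p x y))
  obtain ⟨s, hs⟩ := Submodule.mem_span_singleton.1
    ((ℝ ∙ WithLp.toLp 2 x).starProjection_apply_mem (WithLp.toLp 2 y))
  calc ⨅ j, hS.eigenvalues j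
    _ ≤ (⨅ j, hS.eigenvalues j) * ((-s) ^ 2 + 1 ^ 2) :=
        le_mul_of_one_le_right hnonneg (by nlinarith [sq_nonneg s])
    _ ≤ ‖-s • WithLp.toLp 2 x + (1 : ℝ) • WithLp.toLp 2 y‖ ^ 2 :=
        iInf_eigenvalues_mul_add_sq_le hS (-s) 1
    _ = residualNormSq (WithLp.toLp 2 x) (WithLp.toLp 2 y) := by
        rw [residualNormSq, Submodule.starProjection_orthogonal_val, ← hs, one_smul, neg_smul,
          neg_add_eq_sub]

end SmallestEigenvalue

lemma map_toLp_mvGaussianId_zero (p : ℕ) :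
    (mvGaussianId p 0).map (WithLp.toLp 2) = stdGaussian (EuclideanSpace ℝ (Fin p)) :=
  map_pi_eq_stdGaussian

theorem smallest_eigenvalue_stochastically_dominated_central_general
    {Ω : Type*} [MeasurableSpace Ω] {P : Measure Ω} {p : ℕ} (hp : 2 ≤ p)
    {X Y : Ω → Fin p → ℝ} (hX : AEMeasurable X P) (hY : HasLaw Y (mvGaussianId p 0) P)
    (hXY : IndepFun X Y P)
    (hS : ∀ ω, ((colMatrix p (X ω) (Y ω))ᵀ * colMatrix p (X ω) (Y ω)).IsHermitian)
    {t : ℝ} (ht : 0 ≤ t) :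
    P {ω | (⨅ j, (hS ω).eigenvalues j) > t} ≤ chiSquared ((p : ℝ) - 1) {z | z > t} := by
  have htoLp : Measurable (WithLp.toLp 2 : (Fin p → ℝ) → EuclideanSpace ℝ (Fin p)) := by fun_prop
  have hlaw : HasLaw (fun y ↦ WithLp.toLp 2 y) (stdGaussian (EuclideanSpace ℝ (Fin p)))
      (mvGaussianId p 0) := ⟨htoLp.aemeasurable, map_toLp_mvGaussianId_zero p⟩
  have hsubset : {ω | (⨅ j, (hS ω).eigenvalues j) > t} ⊆ {ω | WithLp.toLp 2 (X ω) ≠ 0 ∧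
      t < residualNormSq (WithLp.toLp 2 (X ω)) (WithLp.toLp 2 (Y ω))} := by
    refine fun ω hω ↦ ⟨fun hXω ↦ ?_, hω.trans_le (iInf_eigenvalues_le_residualNormSq (hS ω))⟩
    have hpos := (ht.trans_lt hω).trans_le (iInf_eigenvalues_le_norm_sq_left (hS ω))
    simp [hXω] at hpos
  have hbound := measure_ne_zero_and_lt_residualNormSq_le (by simpa using hp)
    (htoLp.comp_aemeasurable hX) (hlaw.comp hY) (hXY.comp htoLp htoLp) t
  rw [finrank_euclideanSpace_fin] at hbound
  exact (measure_mono hsubset).trans hbound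

/-- If `X ∼ N(0, I_p)` and `Y ∼ N(0, I_p)` are independent with `p ≥ 2`, then the smallest
eigenvalue of `S = (X Y)ᵀ (X Y)` is stochastically dominated by `χ²_{p-1}`. -/
theorem smallest_eigenvalue_stochastically_dominated_central
    {Ω : Type*} [MeasureSpace Ω] [IsProbabilityMeasure (ℙ : Measure Ω)]
    (p : ℕ) (hp : 2 ≤ p)
    (X Y : Ω → Fin p → ℝ) (hX : Measurable X) (hY : Measurable Y)
    (hXlaw : Measure.map X ℙ = mvGaussianId p 0)
    (hYlaw : Measure.map Y ℙ = mvGaussianId p 0)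
    (hindep : IndepFun X Y ℙ)
    (hS : ∀ ω, ((colMatrix p (X ω) (Y ω))ᵀ * colMatrix p (X ω) (Y ω)).IsHermitian) :
    ∀ t : ℝ, 0 ≤ t →
      ℙ {ω | (⨅ j, (hS ω).eigenvalues j) > t} ≤ chiSquared ((p : ℝ) - 1) {z | z > t} := by
  exact fun t ht ↦ smallest_eigenvalue_stochastically_dominated_central_general hp
    hX.aemeasurable ⟨hY.aemeasurable, hYlaw⟩ hindep hS ht
end

section
/- For every integer j ≥ 1 and every real x with 1 < x < (j+1)/√(j(j+2)), the Legendre polynomials satisfy (j+1)·P_j(x) ≤ (j+2)·(x − √(x² − 1))·P_{j+1}(x). -/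
/-- The Legendre polynomials, as real functions: `P₀(x) = 1`, `P₁(x) = x`, and Bonnet's
recursion `(j+1) P_{j+1}(x) = (2j+1) x P_j(x) - j P_{j-1}(x)` for `j ≥ 1`. -/
noncomputable def legendreP : ℕ → ℝ → ℝ
  | 0, _ => 1
  | 1, x => x
  | n + 2, x =>
      ((2 * (n : ℝ) + 3) * x * legendreP (n + 1) x - ((n : ℝ) + 1) * legendreP n x) /
        ((n : ℝ) + 2)

/-!
Write `s = √(x² - 1)`. For `x ≥ 1` Bonnet's recursion propagates `x P_j ≤ P_{j+1}`, which reduces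
the claim to `j + 1 ≤ (j + 2)(x - s) x`. The difference of the two sides factors as
`(x - s)(x - (j + 1) s)`, and `(j + 1) s ≤ x` is a rearrangement of `x ≤ (j + 1) / √(j (j + 2))`.
-/

theorem legendreP_add_two_sub_mul (n : ℕ) (x : ℝ) :
    ((n : ℝ) + 2) * (legendreP (n + 2) x - x * legendreP (n + 1) x) =
      ((n : ℝ) + 1) * (x * legendreP (n + 1) x - legendreP n x) := by
  rw [legendreP]
  field_simp
  ring

theorem legendreP_pos_and_mul_le_succ {x : ℝ} (hx : 1 ≤ x) (n : ℕ) :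
    0 < legendreP n x ∧ x * legendreP n x ≤ legendreP (n + 1) x := by
  induction n with
  | zero => simp [legendreP]
  | succ n ih =>
    obtain ⟨pos, mul_le⟩ := ih
    have le_succ : legendreP n x ≤ legendreP (n + 1) x :=
      (le_mul_of_one_le_left pos.le hx).trans mul_le
    have pos_succ : 0 < legendreP (n + 1) x := pos.trans_le le_succ
    have le_mul_succ : legendreP n x ≤ x * legendreP (n + 1) x :=
      le_succ.trans (le_mul_of_one_le_left pos_succ.le hx)
    have scaled_nonneg :
        0 ≤ ((n : ℝ) + 2) * (legendreP (n + 2) x - x * legendreP (n + 1) x) := by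
      rw [legendreP_add_two_sub_mul]
      exact mul_nonneg (by positivity) (sub_nonneg.mpr le_mul_succ)
    exact ⟨pos_succ, sub_nonneg.mp (nonneg_of_mul_nonneg_right scaled_nonneg (by positivity))⟩

theorem legendreP_pos {x : ℝ} (hx : 1 ≤ x) (n : ℕ) : 0 < legendreP n x :=
  (legendreP_pos_and_mul_le_succ hx n).1

theorem mul_legendreP_le_legendreP_succ {x : ℝ} (hx : 1 ≤ x) (n : ℕ) :
    x * legendreP n x ≤ legendreP (n + 1) x :=
  (legendreP_pos_and_mul_le_succ hx n).2

theorem sqrt_sq_sub_one_le {x : ℝ} (hx : 0 ≤ x) : √(x ^ 2 - 1) ≤ x :=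
  Real.sqrt_le_iff.mpr ⟨hx, sub_le_self _ zero_le_one⟩

theorem sq_sqrt_sq_sub_one {x : ℝ} (hx : 1 ≤ x) : √(x ^ 2 - 1) ^ 2 = x ^ 2 - 1 :=
  Real.sq_sqrt (sub_nonneg.mpr (one_le_pow₀ hx))

theorem mul_sqrt_sq_sub_one_le_iff {c x : ℝ} (hc : 0 ≤ c) (hx : 1 ≤ x) :
    c * √(x ^ 2 - 1) ≤ x ↔ c ^ 2 * x ^ 2 ≤ c ^ 2 + x ^ 2 := by
  rw [← sq_le_sq₀ (by positivity) (by positivity), mul_pow, sq_sqrt_sq_sub_one hx, mul_sub_one,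
    sub_le_iff_le_add']

theorem mul_sqrt_sq_sub_one_le_comm {c x : ℝ} (hc : 1 ≤ c) (hx : 1 ≤ x) :
    c * √(x ^ 2 - 1) ≤ x ↔ x * √(c ^ 2 - 1) ≤ c := by
  rw [mul_sqrt_sq_sub_one_le_iff (by positivity) hx, mul_sqrt_sq_sub_one_le_iff (by positivity) hc,
    mul_comm, add_comm]

theorem le_add_one_mul_sub_sqrt_mul {c x : ℝ} (hx : 1 ≤ x) (h : c * √(x ^ 2 - 1) ≤ x) :
    c ≤ (c + 1) * (x - √(x ^ 2 - 1)) * x := by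
  have factorization : (c + 1) * (x - √(x ^ 2 - 1)) * x - c =
      (x - √(x ^ 2 - 1)) * (x - c * √(x ^ 2 - 1)) := by
    linear_combination -c * sq_sqrt_sq_sub_one hx
  rw [← sub_nonneg, factorization]
  exact mul_nonneg (sub_nonneg.mpr (sqrt_sq_sub_one_le (by positivity))) (sub_nonneg.mpr h)

/-- For `j ≥ 1` and `1 < x < (j+1)/√(j(j+2))`,
`(j+1) P_j(x) ≤ (j+2)(x - √(x²-1)) P_{j+1}(x)`. -/
theorem legendre_key_inequality_small_x (j : ℕ) (hj : 1 ≤ j) (x : ℝ) (hx1 : 1 < x)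
    (hx2 : x < ((j : ℝ) + 1) / Real.sqrt ((j : ℝ) * ((j : ℝ) + 2))) :
    ((j : ℝ) + 1) * legendreP j x
      ≤ ((j : ℝ) + 2) * (x - Real.sqrt (x ^ 2 - 1)) * legendreP (j + 1) x := by
  have sq_sub_one : ((j : ℝ) + 1) ^ 2 - 1 = j * (j + 2) := by ring
  have mul_sqrt_le : ((j : ℝ) + 1) * √(x ^ 2 - 1) ≤ x := by
    rw [mul_sqrt_sq_sub_one_le_comm (by simp) hx1.le, sq_sub_one]
    exact mul_le_of_le_div₀ (by positivity) (by positivity) hx2.le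
  have coeff_le : (j : ℝ) + 1 ≤ (j + 2) * (x - √(x ^ 2 - 1)) * x := by
    convert le_add_one_mul_sub_sqrt_mul hx1.le mul_sqrt_le using 3
    ring
  have sub_sqrt_nonneg : 0 ≤ x - √(x ^ 2 - 1) :=
    sub_nonneg.mpr (sqrt_sq_sub_one_le (by positivity))
  calc ((j : ℝ) + 1) * legendreP j x
      ≤ (j + 2) * (x - √(x ^ 2 - 1)) * x * legendreP j x :=
        mul_le_mul_of_nonneg_right coeff_le (legendreP_pos hx1.le j).le
    _ = (j + 2) * (x - √(x ^ 2 - 1)) * (x * legendreP j x) := mul_assoc _ _ _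
    _ ≤ (j + 2) * (x - √(x ^ 2 - 1)) * legendreP (j + 1) x :=
        mul_le_mul_of_nonneg_left (mul_legendreP_le_legendreP_succ hx1.le j) (by positivity)
end
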